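/- arXiv:2211.14374 — 3 statements merged into one kernel-verified Lean document; each statement's English description precedes it below -/
import Mathlib

section
/- Let u and w be normalized weights with u convex. Then the following are equivalent: (i) there exist c ≥ 1 and C ≥ 1 with w(t)^c ≤ C·u(t) for all t ≥ 0; (ii) ⋃_{n∈ℕ, n≥1} H^∞_{u^n}(ℂ) ⊆ ⋃_{n∈ℕ, n≥1} H^∞_{w^n}(ℂ), where u^c(t) := u(t)^c; (iii) ⋂_{c>0} H^∞_{u^c}(ℂ) ⊆ ⋂_{c>0} H^∞_{w^c}(ℂ). -/
open Filter Set

/-- The associated weight function `ω_M(t) = sup_j log(t^j / M_j)` for `t ≠ 0`, `ω_M(0) = 0`. -/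
noncomputable def omegaM (M : ℕ → ℝ) (t : ℝ) : ℝ :=
  if t = 0 then 0 else ⨆ j : ℕ, Real.log (t ^ j / M j)

/-- `v_M(t) = exp(-ω_M(t))`. -/
noncomputable def vM (M : ℕ → ℝ) (t : ℝ) : ℝ :=
  Real.exp (-(omegaM M t))

/-- `v_{M,c}(t) = exp(-ω_M(c·t))`. -/
noncomputable def vMc (M : ℕ → ℝ) (c t : ℝ) : ℝ :=
  Real.exp (-(omegaM M (c * t)))

/-- `v_M^c(t) = exp(-c·ω_M(t))`. -/
noncomputable def vMpow (M : ℕ → ℝ) (c t : ℝ) : ℝ :=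
  Real.exp (-(c * omegaM M t))

/-- A weight sequence: positive, `M_0 = 1`, `(M_j)^{1/j} → ∞`. -/
def WeightSeq (M : ℕ → ℝ) : Prop :=
  (∀ j, 0 < M j) ∧ M 0 = 1 ∧
    Tendsto (fun j : ℕ => (M j) ^ (1 / (j : ℝ))) atTop atTop

/-- Log-convexity: `M_j² ≤ M_{j-1}·M_{j+1}` for `j ≥ 1`. -/
def LogConvexSeq (M : ℕ → ℝ) : Prop :=
  ∀ j : ℕ, 1 ≤ j → (M j) ^ 2 ≤ M (j - 1) * M (j + 1)

/-- The class `LC`: normalized log-convex weight sequences. -/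
def LCset (M : ℕ → ℝ) : Prop :=
  WeightSeq M ∧ LogConvexSeq M ∧ 1 ≤ M 1

/-- Weighted space of entire functions with `sup |f(z)|·v(|z|) < ∞`. -/
def Hinf (v : ℝ → ℝ) : Set (ℂ → ℂ) :=
  {f | Differentiable ℂ f ∧
    ∃ C : ℝ, ∀ z : ℂ, ‖f z‖ * v ‖z‖ ≤ C}

/-- The weighted sup-norm `‖f‖_v`. -/
noncomputable def wnorm (v : ℝ → ℝ) (f : ℂ → ℂ) : ℝ :=
  ⨆ z : ℂ, ‖f z‖ * v ‖z‖

/-- A weight: strictly positive, continuous, non-increasing and rapidly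
decreasing on `[0,∞)`. -/
def IsWeight (v : ℝ → ℝ) : Prop :=
  (∀ t : ℝ, 0 ≤ t → 0 < v t) ∧ ContinuousOn v (Set.Ici 0) ∧
    AntitoneOn v (Set.Ici 0) ∧
    ∀ k : ℕ, Tendsto (fun t : ℝ => t ^ k * v t) atTop (nhds 0)

/-- A normalized weight: `v ≡ 1` on `[0,1]`. -/
def NormalizedWeight (v : ℝ → ℝ) : Prop :=
  ∀ t : ℝ, 0 ≤ t → t ≤ 1 → v t = 1

/-- A (log-)convex weight: `t ↦ -log v(eᵗ)` is convex on `ℝ`. -/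
def ConvexWeight (v : ℝ → ℝ) : Prop :=
  ConvexOn ℝ Set.univ fun t : ℝ => -Real.log (v (Real.exp t))

/-- Moderate growth for a weight: `v(H·t) ≤ e^H · v(t)²`. -/
def ModerateGrowthW (v : ℝ → ℝ) : Prop :=
  ∃ H : ℝ, 1 ≤ H ∧ ∀ t : ℝ, 0 ≤ t → v (H * t) ≤ Real.exp H * (v t) ^ 2

/-- Moderate growth (mg) for a sequence: `M_{j+k} ≤ C^{j+k}·M_j·M_k`. -/
def MGseq (M : ℕ → ℝ) : Prop :=
  ∃ C : ℝ, 1 ≤ C ∧ ∀ j k : ℕ, M (j + k) ≤ C ^ (j + k) * M j * M k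

/-- The associated weight sequence `M^v_j = sup_{t>0} t^j·v(t)`. -/
noncomputable def assocSeq (v : ℝ → ℝ) (j : ℕ) : ℝ :=
  ⨆ t : Set.Ioi (0 : ℝ), (t : ℝ) ^ j * v t

/-- The unit ball `B_{1/v}(ℂ)` of entire functions bounded by `1/v`. -/
def BClass (v : ℝ → ℝ) : Set (ℂ → ℂ) :=
  {f | Differentiable ℂ f ∧ ∀ z : ℂ, ‖f z‖ ≤ 1 / v ‖z‖}

/-- The associated growth condition `w̃_v(z) = sup{|f(z)| : f ∈ B_{1/v}}`. -/
noncomputable def wTilde (v : ℝ → ℝ) (z : ℂ) : ℝ :=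
  sSup {x : ℝ | ∃ f ∈ BClass v, x = ‖f z‖}

/-- The associated weight `ṽ = 1/w̃_v`, as a function of `t = |z|`. -/
noncomputable def vTilde (v : ℝ → ℝ) (t : ℝ) : ℝ :=
  1 / wTilde v (t : ℂ)

/-- An essential weight: `v ∼ ṽ`. -/
def Essential (v : ℝ → ℝ) : Prop :=
  ∃ C : ℝ, 1 ≤ C ∧ ∀ t : ℝ, 0 ≤ t →
    v t ≤ C * vTilde v t ∧ vTilde v t ≤ C * v t

/-- `P_v(t) = sup_j t^j/‖z^j‖_v`. -/
noncomputable def Pfun (v : ℝ → ℝ) (t : ℝ) : ℝ :=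
  ⨆ j : ℕ, t ^ j / wnorm v fun z : ℂ => z ^ j

/-- The convolved sequence `(M⋆N)_j = min_{0≤k≤j} M_k·N_{j-k}`. -/
noncomputable def convSeq (M N : ℕ → ℝ) (j : ℕ) : ℝ :=
  (Finset.range (j + 1)).inf' Finset.nonempty_range_add_one fun k => M k * N (j - k)

/-!
The implications out of (i) are pointwise estimates. Conversely, (ii) and (iii) each give
`⋂_{c > 0} H^∞_{u^c} ⊆ ⋃_{q > 0} H^∞_{w^q}`, and a gliding hump shows that this forces (i). Rounding
down the slope of a supporting line of `x ↦ -log (u (eˣ))` to an integer `j` produces, for each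
radius `t`, a monomial `zʲ` whose maximum against `u` is attained at `t` up to a factor `max 1 t`.
Rapid decay absorbs that factor at the price of a slightly different power of `u`. If (i) fails,
there are radii `tₙ` at which `w^(n+1)` exceeds any prescribed multiple of `u^(1/(n+1))`; the
normalized monomials belonging to these radii, summed with weights `2⁻ⁿ`, form an entire function
in every `H^∞_{u^c}` and in no `H^∞_{w^q}`.
-/

namespace IsWeight

variable {v : ℝ → ℝ}

lemma pos (hv : IsWeight v) {t : ℝ} (ht : 0 ≤ t) : 0 < v t :=
  hv.1 t ht

lemma antitoneOn (hv : IsWeight v) : AntitoneOn v (Ici 0) :=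
  hv.2.2.1

lemma le_one (hv : IsWeight v) (hvn : NormalizedWeight v) {t : ℝ} (ht : 0 ≤ t) : v t ≤ 1 :=
  (hv.antitoneOn self_mem_Ici ht ht).trans_eq (hvn 0 le_rfl zero_le_one)

lemma rpow (hv : IsWeight v) {a : ℝ} (ha : 0 < a) : IsWeight fun t => v t ^ a := by
  refine ⟨fun t ht => Real.rpow_pos_of_pos (hv.pos ht) a,
    hv.2.1.rpow_const fun _ _ => Or.inr ha.le,
    fun s hs t ht hst => Real.rpow_le_rpow (hv.pos ht).le (hv.antitoneOn hs ht hst) ha.le,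
    fun k => ?_⟩
  obtain ⟨m, hm⟩ := exists_nat_ge ((k : ℝ) / a)
  have hkm : (k : ℝ) ≤ m * a := (div_le_iff₀ ha).1 hm
  have hlim : Tendsto (fun t : ℝ => (t ^ m * v t) ^ a) atTop (nhds 0) := by
    simpa only [Real.zero_rpow ha.ne'] using (hv.2.2.2 m).rpow_const (Or.inr ha.le)
  refine squeeze_zero' ?_ ?_ hlim
  · filter_upwards [eventually_ge_atTop 0] with t ht
    exact mul_nonneg (pow_nonneg ht k) (Real.rpow_nonneg (hv.pos ht).le a)
  · filter_upwards [eventually_ge_atTop 1] with t ht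
    have ht0 : 0 ≤ t := zero_le_one.trans ht
    have hpow : t ^ k ≤ (t ^ m) ^ a := by
      rw [← Real.rpow_natCast_mul ht0, ← Real.rpow_natCast]
      exact Real.rpow_le_rpow_of_exponent_le ht hkm
    rw [Real.mul_rpow (pow_nonneg ht0 m) (hv.pos ht0).le]
    exact mul_le_mul_of_nonneg_right hpow (Real.rpow_nonneg (hv.pos ht0).le a)

lemma exists_max_one_pow_mul_le (hv : IsWeight v) (k : ℕ) :
    ∃ K : ℝ, ∀ t, 0 ≤ t → max 1 t ^ k * v t ≤ K := by
  obtain ⟨T, hT⟩ := eventually_atTop.1 ((hv.2.2.2 k).eventually_le_const zero_lt_one)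
  refine ⟨max (max 1 T ^ k * v 0) 1, fun t ht => ?_⟩
  rcases le_total t (max 1 T) with h | h
  · refine le_max_of_le_left (mul_le_mul ?_ (hv.antitoneOn self_mem_Ici ht ht)
      (hv.pos ht).le (by positivity))
    exact pow_le_pow_left₀ (by positivity) (max_le (le_max_left 1 T) h) k
  · rw [max_eq_right ((le_max_left 1 T).trans h)]
    exact le_max_of_le_right (hT t ((le_max_right 1 T).trans h))

lemma exists_pow_mul_le (hv : IsWeight v) (k : ℕ) : ∃ K : ℝ, ∀ t, 0 ≤ t → t ^ k * v t ≤ K := by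
  obtain ⟨K, hK⟩ := hv.exists_max_one_pow_mul_le k
  refine ⟨K, fun t ht => (mul_le_mul_of_nonneg_right ?_ (hv.pos ht).le).trans (hK t ht)⟩
  exact pow_le_pow_left₀ ht (le_max_right 1 t) k

end IsWeight

lemma NormalizedWeight.rpow {v : ℝ → ℝ} (hv : NormalizedWeight v) (a : ℝ) :
    NormalizedWeight fun t => v t ^ a := fun t ht0 ht1 => by
  simp only [hv t ht0 ht1, Real.one_rpow]

lemma ConvexWeight.rpow {v : ℝ → ℝ} (hvc : ConvexWeight v) (hv : ∀ t, 0 < t → 0 < v t) {a : ℝ}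
    (ha : 0 ≤ a) : ConvexWeight fun t => v t ^ a := by
  have hlog : (fun t => -Real.log (v (Real.exp t) ^ a)) =
      fun t => a • -Real.log (v (Real.exp t)) := by
    ext t
    rw [Real.log_rpow (hv _ (Real.exp_pos t)), smul_eq_mul, mul_neg]
  unfold ConvexWeight
  rw [hlog]
  exact ConvexOn.smul ha hvc

lemma exists_supporting_line_of_convexOn {S : Set ℝ} {φ : ℝ → ℝ} (hφ : ConvexOn ℝ S φ) {x : ℝ}
    (hx : x ∈ interior S) : ∃ s : ℝ, ∀ y ∈ S, φ x + s * (y - x) ≤ φ y := by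
  refine ⟨derivWithin φ (Ioi x) x, fun y hy => ?_⟩
  rcases lt_trichotomy y x with hyx | rfl | hxy
  · have hslope := (hφ.slope_le_leftDeriv_of_mem_interior hy hx hyx).trans
      (hφ.leftDeriv_le_rightDeriv_of_mem_interior hx)
    rw [slope_def_field, div_le_iff₀ (sub_pos.2 hyx)] at hslope
    linarith
  · simp
  · have hslope := hφ.rightDeriv_le_slope_of_mem_interior hx hy hxy
    rw [slope_def_field, le_div_iff₀ (sub_pos.2 hxy)] at hslope
    linarith

lemma exists_nat_slope_of_convexOn_of_monotone {φ : ℝ → ℝ} (hφ : ConvexOn ℝ univ φ)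
    (hmono : Monotone φ) {x : ℝ} (hx : 0 ≤ x) :
    ∃ j : ℕ, ∀ y, 0 ≤ y → φ x + j * (y - x) ≤ φ y + x := by
  obtain ⟨s, hs⟩ := exists_supporting_line_of_convexOn hφ (x := x) (by simp)
  have hs0 : 0 ≤ s := by linarith [hs (x - 1) trivial, hmono (sub_le_self x zero_le_one)]
  have hj_le : (⌊s⌋₊ : ℝ) ≤ s := Nat.floor_le hs0
  have lt_hj : s < ⌊s⌋₊ + 1 := Nat.lt_floor_add_one s
  refine ⟨⌊s⌋₊, fun y hy => ?_⟩
  have hround : (⌊s⌋₊ - s) * (y - x) ≤ x := by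
    rcases le_total y x with hyx | hxy
    · calc (⌊s⌋₊ - s) * (y - x) = (s - ⌊s⌋₊) * (x - y) := by ring
        _ ≤ 1 * (x - y) := mul_le_mul_of_nonneg_right (by linarith) (sub_nonneg.2 hyx)
        _ ≤ x := by linarith
    · exact (mul_nonpos_of_nonpos_of_nonneg (sub_nonpos.2 hj_le) (sub_nonneg.2 hxy)).trans hx
  linarith [hs y trivial]

section Monomials

variable {v : ℝ → ℝ}

lemma exists_pow_mul_le_of_one_le (hv : IsWeight v) (hvc : ConvexWeight v) {t : ℝ} (ht : 1 ≤ t) :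
    ∃ j : ℕ, ∀ r, 1 ≤ r → r ^ j * v r ≤ t * (t ^ j * v t) := by
  have hmono : Monotone fun x => -Real.log (v (Real.exp x)) := fun x y hxy =>
    neg_le_neg (Real.log_le_log (hv.pos (Real.exp_pos y).le)
      (hv.antitoneOn (Real.exp_pos x).le (Real.exp_pos y).le (Real.exp_le_exp.2 hxy)))
  obtain ⟨j, hj⟩ := exists_nat_slope_of_convexOn_of_monotone hvc hmono (Real.log_nonneg ht)
  refine ⟨j, fun r hr => ?_⟩
  have ht0 : 0 < t := zero_lt_one.trans_le ht
  have hr0 : 0 < r := zero_lt_one.trans_le hr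
  have hvt := hv.pos ht0.le
  have hvr := hv.pos hr0.le
  have hlog := hj (Real.log r) (Real.log_nonneg hr)
  simp only [Real.exp_log ht0, Real.exp_log hr0] at hlog
  rw [← Real.log_le_log_iff (by positivity) (by positivity), Real.log_mul (by positivity) hvr.ne',
    Real.log_mul ht0.ne' (by positivity), Real.log_mul (by positivity) hvt.ne', Real.log_pow,
    Real.log_pow]
  linarith

lemma exists_pow_mul_le_max_one_mul (hv : IsWeight v) (hvn : NormalizedWeight v)
    (hvc : ConvexWeight v) {t : ℝ} (ht : 0 ≤ t) :
    ∃ j : ℕ, ∀ r, 0 ≤ r → r ^ j * v r ≤ max 1 t * (t ^ j * v t) := by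
  rcases le_total t 1 with ht1 | ht1
  · refine ⟨0, fun r hr => ?_⟩
    simpa only [pow_zero, one_mul, max_eq_left ht1, hvn t ht ht1] using hv.le_one hvn hr
  · obtain ⟨j, hj⟩ := exists_pow_mul_le_of_one_le hv hvc ht1
    refine ⟨j, fun r hr => ?_⟩
    rw [max_eq_right ht1]
    rcases le_total r 1 with hr1 | hr1
    · calc r ^ j * v r ≤ 1 ^ j * v 1 := by
            rw [hvn r hr hr1, hvn 1 zero_le_one le_rfl]
            gcongr
        _ ≤ t * (t ^ j * v t) := hj 1 le_rfl
    · exact hj r hr1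

lemma exists_pow_mul_rpow_le (hv : IsWeight v) (hvn : NormalizedWeight v) (hvc : ConvexWeight v)
    {p q : ℝ} (hq : 0 < q) (hpq : p < q) :
    ∃ K : ℝ, 0 < K ∧ ∀ t, 0 ≤ t →
      ∃ j : ℕ, ∀ r, 0 ≤ r → r ^ j * v r ^ q ≤ K * (t ^ j * v t ^ p) := by
  obtain ⟨K, hK⟩ := (hv.rpow (sub_pos.2 hpq)).exists_max_one_pow_mul_le 1
  simp only [pow_one] at hK
  have hK0 : 0 < K := by
    have hv0 := Real.rpow_pos_of_pos (hv.pos le_rfl) (q - p)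
    exact lt_of_lt_of_le (by positivity) (hK 0 le_rfl)
  refine ⟨K, hK0, fun t ht => ?_⟩
  obtain ⟨j, hj⟩ := exists_pow_mul_le_max_one_mul (hv.rpow hq) (hvn.rpow q)
    (hvc.rpow (fun r hr => hv.pos hr.le) hq.le) ht
  refine ⟨j, fun r hr => (hj r hr).trans ?_⟩
  have hvp := Real.rpow_nonneg (hv.pos ht).le p
  calc max 1 t * (t ^ j * v t ^ q) = (max 1 t * v t ^ (q - p)) * (t ^ j * v t ^ p) := by
        rw [← sub_add_cancel q p, Real.rpow_add (hv.pos ht), add_sub_cancel_right]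
        ring
    _ ≤ K * (t ^ j * v t ^ p) := by
        gcongr
        exact hK t ht

lemma exists_normalized_monomial (hv : IsWeight v) (hvn : NormalizedWeight v)
    (hvc : ConvexWeight v) {p q : ℝ} (hq : 0 < q) (hpq : p < q) :
    ∃ κ : ℝ, 0 < κ ∧ ∀ t, 0 ≤ t → ∃ (b : ℝ) (j : ℕ), 0 ≤ b ∧
      (∀ r, 0 ≤ r → b * r ^ j * v r ^ q ≤ 1) ∧ b * t ^ j * v t ^ p = κ := by
  obtain ⟨K, hK, hpeak⟩ := exists_pow_mul_rpow_le hv hvn hvc hq hpq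
  refine ⟨K⁻¹, inv_pos.2 hK, fun t ht => ?_⟩
  obtain ⟨j, hj⟩ := hpeak t ht
  have hj1 : 1 ≤ K * (t ^ j * v t ^ p) := by
    simpa only [one_pow, hvn 1 zero_le_one le_rfl, Real.one_rpow, one_mul] using hj 1 zero_le_one
  have hpos : 0 < K * (t ^ j * v t ^ p) := zero_lt_one.trans_le hj1
  refine ⟨(K * (t ^ j * v t ^ p))⁻¹, j, (inv_pos.2 hpos).le, fun r hr => ?_, ?_⟩
  · rw [mul_assoc, inv_mul_le_one₀ hpos]
    exact hj r hr
  · rw [mul_assoc, mul_inv, inv_mul_cancel_right₀ (right_ne_zero_of_mul hpos.ne')]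

end Monomials

/-- The function `z ↦ ∑ᵢ aᵢ z^(jᵢ)`. The exponents `jᵢ` may repeat, which spares regrouping the
series as a power series. -/
noncomputable def monomialSeries {ι : Type*} (a : ι → ℝ) (j : ι → ℕ) (z : ℂ) : ℂ :=
  ∑' i, (a i : ℂ) * z ^ j i

namespace monomialSeries

variable {ι : Type*} {a : ι → ℝ} {j : ι → ℕ}

lemma norm_term (ha : ∀ i, 0 ≤ a i) (i : ι) (z : ℂ) :
    ‖(a i : ℂ) * z ^ j i‖ = a i * ‖z‖ ^ j i := by
  rw [norm_mul, norm_pow, Complex.norm_of_nonneg (ha i)]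

lemma differentiable (ha : ∀ i, 0 ≤ a i)
    (hsum : ∀ r : ℝ, 0 ≤ r → Summable fun i => a i * r ^ j i) :
    Differentiable ℂ (monomialSeries a j) := by
  intro z
  have hdiff : DifferentiableOn ℂ (monomialSeries a j) (Metric.ball 0 (‖z‖ + 1)) := by
    refine Complex.differentiableOn_tsum_of_summable_norm (hsum (‖z‖ + 1) (by positivity))
      (fun i => by fun_prop) Metric.isOpen_ball fun i y hy => ?_
    rw [norm_term ha]
    exact mul_le_mul_of_nonneg_left
      (pow_le_pow_left₀ (norm_nonneg y) (mem_ball_zero_iff.1 hy).le _) (ha i)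
  exact hdiff.differentiableAt (Metric.isOpen_ball.mem_nhds (by simp))

lemma norm_le (ha : ∀ i, 0 ≤ a i) (z : ℂ) (hsum : Summable fun i => a i * ‖z‖ ^ j i) :
    ‖monomialSeries a j z‖ ≤ ∑' i, a i * ‖z‖ ^ j i :=
  tsum_of_norm_bounded hsum.hasSum fun i => (norm_term ha i z).le

lemma mul_pow_le_norm (ha : ∀ i, 0 ≤ a i) {t : ℝ} (ht : 0 ≤ t)
    (hsum : Summable fun i => a i * t ^ j i) (i : ι) :
    a i * t ^ j i ≤ ‖monomialSeries a j t‖ := by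
  have hreal : monomialSeries a j t = ((∑' i, a i * t ^ j i : ℝ) : ℂ) := by
    simp only [monomialSeries, Complex.ofReal_tsum, Complex.ofReal_mul, Complex.ofReal_pow]
  have hterm : ∀ i, 0 ≤ a i * t ^ j i := fun i => mul_nonneg (ha i) (pow_nonneg ht _)
  rw [hreal, Complex.norm_of_nonneg (tsum_nonneg hterm)]
  exact hsum.le_tsum i fun i _ => hterm i

variable {v : ℝ → ℝ} {B : ι → ℝ}

lemma summable (hv : ∀ t, 0 ≤ t → 0 < v t) (ha : ∀ i, 0 ≤ a i) (hB : Summable B)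
    (h : ∀ᶠ i in cofinite, ∀ r, 0 ≤ r → a i * r ^ j i * v r ≤ B i) {r : ℝ} (hr : 0 ≤ r) :
    Summable fun i => a i * r ^ j i := by
  refine (hB.div_const (v r)).of_norm_bounded_eventually (h.mono fun i hi => ?_)
  rw [Real.norm_of_nonneg (mul_nonneg (ha i) (pow_nonneg hr _)), le_div_iff₀ (hv r hr)]
  exact hi r hr

lemma mem_Hinf (hv : IsWeight v) (ha : ∀ i, 0 ≤ a i) (hB : Summable B)
    (h : ∀ᶠ i in cofinite, ∀ r, 0 ≤ r → a i * r ^ j i * v r ≤ B i) :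
    monomialSeries a j ∈ Hinf v := by
  have hsum {r : ℝ} (hr : 0 ≤ r) : Summable fun i => a i * r ^ j i :=
    summable (fun t => hv.pos) ha hB h hr
  have hbound : ∀ i, ∃ M : ℝ, (∀ r, 0 ≤ r → a i * r ^ j i * v r ≤ M) ∧
      ((∀ r, 0 ≤ r → a i * r ^ j i * v r ≤ B i) → M = B i) := by
    intro i
    by_cases hi : ∀ r, 0 ≤ r → a i * r ^ j i * v r ≤ B i
    · exact ⟨B i, hi, fun _ => rfl⟩
    · obtain ⟨K, hK⟩ := hv.exists_pow_mul_le (j i)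
      refine ⟨a i * K, fun r hr => ?_, fun h' => absurd h' hi⟩
      rw [mul_assoc]
      exact mul_le_mul_of_nonneg_left (hK r hr) (ha i)
  choose M hM hMB using hbound
  have hMsum : Summable M := hB.congr_cofinite (h.mono fun i hi => (hMB i hi).symm)
  refine ⟨differentiable ha fun r => hsum, ∑' i, M i, fun z => ?_⟩
  have hz : 0 ≤ ‖z‖ := norm_nonneg z
  calc ‖monomialSeries a j z‖ * v ‖z‖ ≤ (∑' i, a i * ‖z‖ ^ j i) * v ‖z‖ :=
        mul_le_mul_of_nonneg_right (norm_le ha z (hsum hz)) (hv.pos hz).le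
    _ = ∑' i, a i * ‖z‖ ^ j i * v ‖z‖ := tsum_mul_right.symm
    _ ≤ ∑' i, M i := ((hsum hz).mul_right _).tsum_le_tsum (fun i => hM i _ hz) hMsum

end monomialSeries

lemma exists_mem_Hinf_rpow_forall_le_norm_mul {u : ℝ → ℝ} (hu : IsWeight u)
    (hun : NormalizedWeight u) (huc : ConvexWeight u) {p : ℕ → ℝ} (hp : ∀ n, 0 < p n)
    (hp_lim : Tendsto p atTop (nhds 0)) :
    ∃ κ : ℕ → ℝ, (∀ n, 0 < κ n) ∧ ∀ t : ℕ → ℝ, (∀ n, 0 ≤ t n) →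
      ∃ f : ℂ → ℂ, (∀ c : ℝ, 0 < c → f ∈ Hinf fun r => u r ^ c) ∧
        ∀ n, κ n ≤ ‖f (t n)‖ * u (t n) ^ p n := by
  choose κ hκ hmonomial using fun n => exists_normalized_monomial hu hun huc (p := p n)
    (q := 2 * p n) (by linarith [hp n]) (by linarith [hp n])
  refine ⟨fun n => (1 / 2) ^ n * κ n, fun n => mul_pos (by positivity) (hκ n), fun t ht => ?_⟩
  choose b j hb hb_le hb_eq using fun n => hmonomial n (t n) (ht n)
  set a : ℕ → ℝ := fun n => (1 / 2) ^ n * b n with ha_def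
  have ha : ∀ n, 0 ≤ a n := fun n => mul_nonneg (by positivity) (hb n)
  have ha_le : ∀ c : ℝ, 0 < c →
      ∀ᶠ n in cofinite, ∀ r, 0 ≤ r → a n * r ^ j n * u r ^ c ≤ (1 / 2) ^ n := by
    intro c hc
    rw [Nat.cofinite_eq_atTop]
    filter_upwards [hp_lim.eventually_le_const (half_pos hc)] with n hn r hr
    have hpow : u r ^ c ≤ u r ^ (2 * p n) :=
      Real.rpow_le_rpow_of_exponent_ge (hu.pos hr) (hu.le_one hun hr) (by linarith)
    calc a n * r ^ j n * u r ^ c ≤ a n * r ^ j n * u r ^ (2 * p n) :=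
          mul_le_mul_of_nonneg_left hpow (mul_nonneg (ha n) (pow_nonneg hr _))
      _ = (1 / 2) ^ n * (b n * r ^ j n * u r ^ (2 * p n)) := by ring
      _ ≤ (1 / 2) ^ n := mul_le_of_le_one_right (by positivity) (hb_le n r hr)
  refine ⟨monomialSeries a j, fun c hc => monomialSeries.mem_Hinf (hu.rpow hc) ha
    summable_geometric_two (ha_le c hc), fun n => ?_⟩
  have hsum : Summable fun i => a i * t n ^ j i :=
    monomialSeries.summable (fun r => (hu.rpow one_pos).pos) ha summable_geometric_two
      (ha_le 1 one_pos) (ht n)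
  calc (1 / 2) ^ n * κ n = a n * t n ^ j n * u (t n) ^ p n := by
        rw [← hb_eq n, ha_def]
        ring
    _ ≤ ‖monomialSeries a j (t n)‖ * u (t n) ^ p n :=
        mul_le_mul_of_nonneg_right (monomialSeries.mul_pow_le_norm ha (ht n) hsum n)
          (Real.rpow_nonneg (hu.pos (ht n)).le _)

/-- The growth relation `u ≼^𝔠 w` between weights: some power of `w` is dominated by `u`. This is
condition (i). -/
def PowDominated (u w : ℝ → ℝ) : Prop :=
  ∃ c : ℝ, 1 ≤ c ∧ ∃ C : ℝ, 1 ≤ C ∧ ∀ t : ℝ, 0 ≤ t → w t ^ c ≤ C * u t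

lemma Hinf_subset_of_le_mul {u w : ℝ → ℝ} {C : ℝ} (hC : 0 ≤ C)
    (h : ∀ t, 0 ≤ t → w t ≤ C * u t) : Hinf u ⊆ Hinf w := by
  rintro f ⟨hf, D, hD⟩
  refine ⟨hf, C * D, fun z => ?_⟩
  calc ‖f z‖ * w ‖z‖ ≤ ‖f z‖ * (C * u ‖z‖) :=
        mul_le_mul_of_nonneg_left (h _ (norm_nonneg z)) (norm_nonneg _)
    _ = C * (‖f z‖ * u ‖z‖) := mul_left_comm _ _ _
    _ ≤ C * D := mul_le_mul_of_nonneg_left (hD z) hC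

section Comparison

variable {u w : ℝ → ℝ}

lemma PowDominated.exists_Hinf_rpow_subset (hu : ∀ t, 0 ≤ t → 0 ≤ u t)
    (hw : ∀ t, 0 ≤ t → w t ∈ Icc 0 1) (h : PowDominated u w) :
    ∃ c : ℝ, 1 ≤ c ∧ ∀ p q : ℝ, 0 < p → c * p ≤ q →
      (Hinf fun t => u t ^ p) ⊆ Hinf fun t => w t ^ q := by
  obtain ⟨c, hc, C, hC, hwu⟩ := h
  refine ⟨c, hc, fun p q hp hq => Hinf_subset_of_le_mul (C := C ^ p) (by positivity) ?_⟩
  intro t ht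
  obtain ⟨hw0, hw1⟩ := hw t ht
  calc w t ^ q ≤ w t ^ (c * p) :=
        Real.rpow_le_rpow_of_exponent_ge' hw0 hw1 (by positivity) hq
    _ = (w t ^ c) ^ p := Real.rpow_mul hw0 c p
    _ ≤ (C * u t) ^ p := Real.rpow_le_rpow (by positivity) (hwu t ht) hp.le
    _ = C ^ p * u t ^ p := Real.mul_rpow (by positivity) (hu t ht)

lemma powDominated_of_rpow_le_mul_rpow (hu : ∀ t, 0 ≤ t → 0 ≤ u t) (hw : ∀ t, 0 ≤ t → 0 ≤ w t)
    {A p q : ℝ} (hA : 0 ≤ A) (hp : 0 < p) (hpq : p ≤ q)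
    (h : ∀ t, 0 ≤ t → w t ^ q ≤ A * u t ^ p) : PowDominated u w := by
  refine ⟨q / p, (one_le_div hp).2 hpq, max 1 (A ^ p⁻¹), le_max_left _ _, fun t ht => ?_⟩
  have hut := hu t ht
  calc w t ^ (q / p) = (w t ^ q) ^ p⁻¹ := by rw [div_eq_mul_inv, Real.rpow_mul (hw t ht)]
    _ ≤ (A * u t ^ p) ^ p⁻¹ :=
        Real.rpow_le_rpow (Real.rpow_nonneg (hw t ht) q) (h t ht) (inv_nonneg.2 hp.le)
    _ = A ^ p⁻¹ * u t := by
        rw [Real.mul_rpow hA (Real.rpow_nonneg hut p), Real.rpow_rpow_inv hut hp.ne']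
    _ ≤ max 1 (A ^ p⁻¹) * u t := mul_le_mul_of_nonneg_right (le_max_right _ _) hut

lemma notMem_Hinf_of_forall_nat_le {f : ℂ → ℂ} {q : ℝ} (hq : 0 ≤ q)
    (hw : ∀ t, 0 ≤ t → w t ∈ Icc 0 1) {t : ℕ → ℝ} (ht : ∀ n, 0 ≤ t n)
    (h : ∀ n : ℕ, (n : ℝ) ≤ ‖f (t n)‖ * w (t n) ^ ((n : ℝ) + 1)) :
    f ∉ Hinf fun r => w r ^ q := by
  rintro ⟨-, D, hD⟩
  obtain ⟨n, hn⟩ := exists_nat_gt (max q D)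
  have hqn : q ≤ (n : ℝ) + 1 := by linarith [le_max_left q D]
  have hDn := hD (t n)
  rw [Complex.norm_of_nonneg (ht n)] at hDn
  have hpow : w (t n) ^ ((n : ℝ) + 1) ≤ w (t n) ^ q :=
    Real.rpow_le_rpow_of_exponent_ge' (hw _ (ht n)).1 (hw _ (ht n)).2 hq hqn
  linarith [h n, mul_le_mul_of_nonneg_left hpow (norm_nonneg (f (t n))), le_max_right q D]

lemma powDominated_of_iInter_Hinf_subset_iUnion (hu : IsWeight u) (hun : NormalizedWeight u)
    (huc : ConvexWeight u) (hw : ∀ t, 0 ≤ t → w t ∈ Icc 0 1)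
    (h : (⋂ c : {c : ℝ // 0 < c}, Hinf fun t => u t ^ c.1) ⊆
      ⋃ q : {q : ℝ // 0 < q}, Hinf fun t => w t ^ q.1) : PowDominated u w := by
  by_contra hdom
  have hp : ∀ n : ℕ, 0 < 1 / ((n : ℝ) + 1) := fun n => Nat.one_div_pos_of_nat
  obtain ⟨κ, hκ, hpeak⟩ := exists_mem_Hinf_rpow_forall_le_norm_mul hu hun huc hp
    tendsto_one_div_add_atTop_nhds_zero_nat
  have hradii : ∀ n : ℕ, ∃ t, 0 ≤ t ∧
      n / κ n * u t ^ (1 / ((n : ℝ) + 1)) < w t ^ ((n : ℝ) + 1) := fun n => by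
    by_contra! hle
    have hpq : 1 / ((n : ℝ) + 1) ≤ n + 1 := by
      rw [div_le_iff₀ (by positivity)]
      nlinarith [n.cast_nonneg (α := ℝ)]
    exact hdom (powDominated_of_rpow_le_mul_rpow (fun t ht => (hu.pos ht).le)
      (fun t ht => (hw t ht).1) (div_nonneg n.cast_nonneg (hκ n).le) (hp n) hpq hle)
  choose t ht htw using hradii
  obtain ⟨f, hf, hfκ⟩ := hpeak t ht
  obtain ⟨⟨q, hq⟩, hfq⟩ := mem_iUnion.1 (h (mem_iInter.2 fun c => hf c.1 c.2))
  refine notMem_Hinf_of_forall_nat_le hq.le hw ht (fun n => ?_) hfq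
  calc (n : ℝ) = n / κ n * κ n := (div_mul_cancel₀ _ (hκ n).ne').symm
    _ ≤ n / κ n * (‖f (t n)‖ * u (t n) ^ (1 / ((n : ℝ) + 1))) :=
        mul_le_mul_of_nonneg_left (hfκ n) (div_nonneg n.cast_nonneg (hκ n).le)
    _ = ‖f (t n)‖ * (n / κ n * u (t n) ^ (1 / ((n : ℝ) + 1))) := mul_left_comm _ _ _
    _ ≤ ‖f (t n)‖ * w (t n) ^ ((n : ℝ) + 1) :=
        mul_le_mul_of_nonneg_left (htw n).le (norm_nonneg _)

end Comparison

theorem stmt14_general (u w : ℝ → ℝ) (hu : IsWeight u) (hun : NormalizedWeight u)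
    (huc : ConvexWeight u) (hw : ∀ t, 0 ≤ t → w t ∈ Icc 0 1) :
    (PowDominated u w ↔
      (⋃ n : {n : ℕ // 1 ≤ n}, Hinf fun t : ℝ => u t ^ (n.1 : ℝ)) ⊆
        ⋃ n : {n : ℕ // 1 ≤ n}, Hinf fun t : ℝ => w t ^ (n.1 : ℝ)) ∧
    (PowDominated u w ↔
      (⋂ c : {c : ℝ // 0 < c}, Hinf fun t : ℝ => u t ^ c.1) ⊆
        ⋂ c : {c : ℝ // 0 < c}, Hinf fun t : ℝ => w t ^ c.1) := by
  have hu0 : ∀ t, 0 ≤ t → 0 ≤ u t := fun t ht => (hu.pos ht).le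
  refine ⟨⟨fun h => iUnion_subset ?_, fun h => ?_⟩, ⟨fun h => subset_iInter ?_, fun h => ?_⟩⟩
  · rintro ⟨n, hn⟩
    obtain ⟨c, hc, hsub⟩ := h.exists_Hinf_rpow_subset hu0 hw
    obtain ⟨m, hm⟩ := exists_nat_ge (c * n)
    have hn0 : (0 : ℝ) < n := Nat.cast_pos.2 hn
    have hm0 : (0 : ℝ) < m := (mul_pos (zero_lt_one.trans_le hc) hn0).trans_le hm
    exact subset_iUnion_of_subset ⟨m, Nat.cast_pos.1 hm0⟩ (hsub n m hn0 hm)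
  · refine powDominated_of_iInter_Hinf_subset_iUnion hu hun huc hw fun f hf => ?_
    have hf1 : f ∈ Hinf fun t => u t ^ ((1 : ℕ) : ℝ) :=
      mem_iInter.1 hf ⟨(1 : ℕ), Nat.cast_pos.2 one_pos⟩
    obtain ⟨⟨n, hn⟩, hfn⟩ := mem_iUnion.1 (h (mem_iUnion.2 ⟨⟨1, le_rfl⟩, hf1⟩))
    exact mem_iUnion.2 ⟨⟨n, Nat.cast_pos.2 hn⟩, hfn⟩
  · rintro ⟨q, hq⟩
    obtain ⟨c, hc, hsub⟩ := h.exists_Hinf_rpow_subset hu0 hw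
    have hc0 : 0 < c := zero_lt_one.trans_le hc
    exact iInter_subset_of_subset ⟨q / c, div_pos hq hc0⟩
      (hsub (q / c) q (div_pos hq hc0) (mul_div_cancel₀ q hc0.ne').le)
  · exact powDominated_of_iInter_Hinf_subset_iUnion hu hun huc hw
      (h.trans (iInter_subset_of_subset ⟨1, one_pos⟩
        (subset_iUnion_of_subset ⟨1, one_pos⟩ subset_rfl)))

/-- Theorem: for normalized weights `u`, `w` with `u` convex: `u ≼^𝔠 w` is
equivalent to inclusion of the exponential-type unions, and to inclusion of
the exponential-type intersections. -/
theorem stmt14 (u w : ℝ → ℝ) (hu : IsWeight u) (hun : NormalizedWeight u)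
    (huc : ConvexWeight u) (hw : IsWeight w) (hwn : NormalizedWeight w) :
    ((∃ c : ℝ, 1 ≤ c ∧ ∃ C : ℝ, 1 ≤ C ∧
        ∀ t : ℝ, 0 ≤ t → (w t) ^ c ≤ C * u t) ↔
      (⋃ n : {n : ℕ // 1 ≤ n}, Hinf fun t : ℝ => u t ^ (n.1 : ℝ)) ⊆
        ⋃ n : {n : ℕ // 1 ≤ n}, Hinf fun t : ℝ => w t ^ (n.1 : ℝ)) ∧
    ((∃ c : ℝ, 1 ≤ c ∧ ∃ C : ℝ, 1 ≤ C ∧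
        ∀ t : ℝ, 0 ≤ t → (w t) ^ c ≤ C * u t) ↔
      (⋂ c : {c : ℝ // 0 < c}, Hinf fun t : ℝ => u t ^ c.1) ⊆
        ⋂ c : {c : ℝ // 0 < c}, Hinf fun t : ℝ => w t ^ c.1) :=
  stmt14_general u w hu hun huc fun _ ht => ⟨(hw.pos ht).le, hw.le_one hwn ht⟩
end

section
/- Let u be a normalized weight. Then H^∞_u(ℂ) is not closed under pointwise multiplication: there exist f, g ∈ H^∞_u(ℂ) such that the pointwise product f·g does not belong to H^∞_u(ℂ). In particular, for every M ∈ LC the space H^∞_{v_M}(ℂ) is not closed under pointwise multiplication. -/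
open Filter Set

/-!
Write `N n = sup_{t > 0} tⁿ v(t)`. The monomials `zⁿ / N n` lie in the unit ball of `H^∞_v(ℂ)` for
`n ≥ 1`, so `f(z) = ∑_{n ≥ 1} zⁿ / (n² N n)` belongs to the space. Its Taylor coefficients are
nonnegative, so on the positive axis `f²` dominates each `(tⁿ / (n² N n))²`. If `f²` also belonged
to the space, then `N (2n) ≤ C n⁴ (N n)²` for all `n ≥ 1`, and iterating along `n = 2ⁱ` would give
`N (2ⁱ) ≤ A ^ 2ⁱ` for some `A`. But `N n ≥ tⁿ v(t)` for every `t > 0`, so `N n` eventually exceeds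
`Aⁿ`, whatever `A` is.
-/

/-- The common ground of the weights `u` and the functions `v_M`: positivity and rapid decrease on
`(0, ∞)`, the latter in the form that `t ^ j * v t` is bounded there for each `j`, so that the
supremum `assocSeq v j` is genuine. -/
structure IsPreWeight (v : ℝ → ℝ) : Prop where
  pos : ∀ t, 0 < t → 0 < v t
  bddAbove : ∀ j : ℕ, BddAbove (range fun t : Ioi (0 : ℝ) => (t : ℝ) ^ j * v t)

/-- The function `∑ₙ aₙ zⁿ / M^v_n`, where `M^v` is the associated weight sequence of `v`: a
combination with coefficients `aₙ` of monomials normalized in `H^∞_v(ℂ)`. -/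
noncomputable def weightedSeries (v : ℝ → ℝ) (a : ℕ → ℝ) (z : ℂ) : ℂ :=
  ∑' n, ((a n / assocSeq v n : ℝ) : ℂ) * z ^ n

namespace IsPreWeight

variable {v : ℝ → ℝ} {a : ℕ → ℝ} {t : ℝ}

lemma pow_mul_le_assocSeq (hv : IsPreWeight v) (j : ℕ) (ht : 0 < t) :
    t ^ j * v t ≤ assocSeq v j :=
  le_ciSup (hv.bddAbove j) ⟨t, ht⟩

lemma assocSeq_pos (hv : IsPreWeight v) (j : ℕ) : 0 < assocSeq v j :=
  (mul_pos (pow_pos one_pos j) (hv.pos 1 one_pos)).trans_le (hv.pow_mul_le_assocSeq j one_pos)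

lemma eventually_pow_lt_assocSeq (hv : IsPreWeight v) (A : ℝ) :
    ∀ᶠ n in atTop, A ^ n < assocSeq v n := by
  have ht : 0 < |A| + 1 := by positivity
  have hratio : |A / (|A| + 1)| < 1 := by
    rw [abs_div, abs_of_pos ht, div_lt_one ht]
    exact lt_add_one _
  filter_upwards [(tendsto_pow_atTop_nhds_zero_of_abs_lt_one hratio).eventually_lt_const
    (hv.pos _ ht)] with n hn
  rw [div_pow, div_lt_iff₀' (pow_pos ht n)] at hn
  exact hn.trans_le (hv.pow_mul_le_assocSeq n ht)

lemma norm_weightedSeries_term_le (hv : IsPreWeight v) (ht : 0 < t) {z : ℂ} (hz : ‖z‖ ≤ t)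
    (n : ℕ) : ‖((a n / assocSeq v n : ℝ) : ℂ) * z ^ n‖ ≤ |a n| * (v t)⁻¹ := by
  have hN := hv.assocSeq_pos n
  have hquot : t ^ n / assocSeq v n ≤ (v t)⁻¹ := by
    rw [div_le_iff₀ hN, inv_mul_eq_div, le_div_iff₀ (hv.pos t ht)]
    exact hv.pow_mul_le_assocSeq n ht
  calc ‖((a n / assocSeq v n : ℝ) : ℂ) * z ^ n‖
      = |a n| * (‖z‖ ^ n / assocSeq v n) := by
        rw [norm_mul, norm_pow, Complex.norm_real, Real.norm_eq_abs, abs_div, abs_of_pos hN]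
        ring
    _ ≤ |a n| * (t ^ n / assocSeq v n) := by gcongr
    _ ≤ |a n| * (v t)⁻¹ := by gcongr

lemma differentiable_weightedSeries (hv : IsPreWeight v) (ha : Summable a) :
    Differentiable ℂ (weightedSeries v a) := by
  intro z
  have hr : 0 < ‖z‖ + 1 := by positivity
  have hball : DifferentiableOn ℂ (weightedSeries v a) (Metric.ball 0 (‖z‖ + 1)) :=
    Complex.differentiableOn_tsum_of_summable_norm (ha.abs.mul_right _) (fun n => by fun_prop)
      Metric.isOpen_ball
      fun n w hw => hv.norm_weightedSeries_term_le hr (mem_ball_zero_iff.1 hw).le n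
  exact hball.differentiableAt (Metric.isOpen_ball.mem_nhds (by simp))

lemma norm_weightedSeries_mul_le (hv : IsPreWeight v) (ha : Summable a) {z : ℂ} (hz : z ≠ 0) :
    ‖weightedSeries v a z‖ * v ‖z‖ ≤ ∑' n, |a n| := by
  have hz' : 0 < ‖z‖ := norm_pos_iff.2 hz
  rw [← le_div_iff₀ (hv.pos _ hz'), div_eq_mul_inv]
  exact tsum_of_norm_bounded (ha.abs.hasSum.mul_right _)
    (hv.norm_weightedSeries_term_le hz' le_rfl)

lemma weightedSeries_mem_Hinf (hv : IsPreWeight v) (ha : Summable a) :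
    weightedSeries v a ∈ Hinf v := by
  refine ⟨hv.differentiable_weightedSeries ha,
    max (‖weightedSeries v a 0‖ * v ‖(0 : ℂ)‖) (∑' n, |a n|), fun z => ?_⟩
  rcases eq_or_ne z 0 with rfl | hz
  · exact le_max_left _ _
  · exact (hv.norm_weightedSeries_mul_le ha hz).trans (le_max_right _ _)

lemma le_norm_weightedSeries (hv : IsPreWeight v) (ha : Summable a) (ha₀ : ∀ n, 0 ≤ a n)
    (ht : 0 < t) (n : ℕ) : a n / assocSeq v n * t ^ n ≤ ‖weightedSeries v a t‖ := by
  have hnonneg (k : ℕ) : 0 ≤ a k / assocSeq v k * t ^ k :=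
    mul_nonneg (div_nonneg (ha₀ k) (hv.assocSeq_pos k).le) (pow_nonneg ht.le k)
  have hnorm (k : ℕ) : ‖((a k / assocSeq v k : ℝ) : ℂ) * (t : ℂ) ^ k‖
      = a k / assocSeq v k * t ^ k := by
    rw [← Complex.ofReal_pow, ← Complex.ofReal_mul, Complex.norm_of_nonneg (hnonneg k)]
  have hsum : Summable fun k => a k / assocSeq v k * t ^ k :=
    (ha.abs.mul_right (v t)⁻¹).of_nonneg_of_le hnonneg fun k => hnorm k ▸
      hv.norm_weightedSeries_term_le ht (Complex.norm_of_nonneg ht.le).le k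
  have hreal : weightedSeries v a t = ((∑' k, a k / assocSeq v k * t ^ k : ℝ) : ℂ) := by
    simp only [weightedSeries, Complex.ofReal_tsum, Complex.ofReal_mul, Complex.ofReal_pow]
  rw [hreal, Complex.norm_of_nonneg (tsum_nonneg hnonneg)]
  exact hsum.le_tsum n fun k _ => hnonneg k

lemma exists_assocSeq_add_le (hv : IsPreWeight v) (ha : Summable a) (ha₀ : ∀ n, 0 ≤ a n)
    (hmul : (fun z => weightedSeries v a z * weightedSeries v a z) ∈ Hinf v) :
    ∃ C, ∀ j k, a j * a k * assocSeq v (j + k) ≤ C * (assocSeq v j * assocSeq v k) := by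
  obtain ⟨-, C, hC⟩ := hmul
  refine ⟨C, fun j k => ?_⟩
  have hj := hv.assocSeq_pos j
  have hk := hv.assocSeq_pos k
  rw [assocSeq, Real.mul_iSup_of_nonneg (mul_nonneg (ha₀ j) (ha₀ k))]
  refine ciSup_le fun ⟨t, ht⟩ => ?_
  have hbound : ‖weightedSeries v a t‖ * ‖weightedSeries v a t‖ * v t ≤ C := by
    simpa only [norm_mul, Complex.norm_of_nonneg (le_of_lt ht)] using hC t
  have hlower : a j / assocSeq v j * t ^ j * (a k / assocSeq v k * t ^ k)
      ≤ ‖weightedSeries v a t‖ * ‖weightedSeries v a t‖ :=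
    mul_le_mul (hv.le_norm_weightedSeries ha ha₀ ht j) (hv.le_norm_weightedSeries ha ha₀ ht k)
      (mul_nonneg (div_nonneg (ha₀ k) hk.le) (pow_nonneg (le_of_lt ht) k)) (norm_nonneg _)
  calc a j * a k * (t ^ (j + k) * v t)
      = a j / assocSeq v j * t ^ j * (a k / assocSeq v k * t ^ k) * v t
          * (assocSeq v j * assocSeq v k) := by
        field_simp
        ring
    _ ≤ C * (assocSeq v j * assocSeq v k) := by
        refine mul_le_mul_of_nonneg_right ?_ (mul_pos hj hk).le
        exact (mul_le_mul_of_nonneg_right hlower (hv.pos t ht).le).trans hbound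

end IsPreWeight

lemma le_pow_two_pow_of_succ_le_sq {K : ℕ → ℝ} (hK : ∀ i, 0 ≤ K i)
    (hsq : ∀ i, K (i + 1) ≤ K i ^ 2) (i : ℕ) : K i ≤ K 0 ^ 2 ^ i := by
  induction i with
  | zero => simp
  | succ i ih =>
    calc K (i + 1) ≤ K i ^ 2 := hsq i
      _ ≤ (K 0 ^ 2 ^ i) ^ 2 := pow_le_pow_left₀ (hK i) ih 2
      _ = K 0 ^ 2 ^ (i + 1) := by rw [← pow_mul, pow_succ 2 i]

lemma exists_le_pow_two_pow_of_succ_le_mul_sq {L : ℕ → ℝ} {C q : ℝ} (hL : ∀ i, 0 ≤ L i)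
    (hq : 1 ≤ q) (hsucc : ∀ i, L (i + 1) ≤ C * q ^ i * L i ^ 2) :
    ∃ A, ∀ i, L i ≤ A ^ 2 ^ i := by
  obtain ⟨D, hCD, hD⟩ : ∃ D, C ≤ D ∧ 1 ≤ D := ⟨max C 1, le_max_left C 1, le_max_right C 1⟩
  -- Rescaling by `D * q ^ (i + 1)` absorbs the factor `C * q ^ i` into the square.
  let K (i : ℕ) : ℝ := D * q ^ (i + 1) * L i
  have hone_le (i : ℕ) : 1 ≤ D * q ^ (i + 1) :=
    one_le_mul_of_one_le_of_one_le hD (one_le_pow₀ hq)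
  have hscale (i : ℕ) : 0 ≤ D * q ^ (i + 1) := zero_le_one.trans (hone_le i)
  have hK (i : ℕ) : 0 ≤ K i := mul_nonneg (hscale i) (hL i)
  have hsq (i : ℕ) : K (i + 1) ≤ K i ^ 2 :=
    calc K (i + 1) ≤ D * q ^ (i + 1 + 1) * (C * q ^ i * L i ^ 2) :=
          mul_le_mul_of_nonneg_left (hsucc i) (hscale (i + 1))
      _ ≤ D * q ^ (i + 1 + 1) * (D * q ^ i * L i ^ 2) := by
          have := hscale (i + 1)
          gcongr
      _ = K i ^ 2 := by ring
  refine ⟨K 0, fun i => le_trans ?_ (le_pow_two_pow_of_succ_le_sq hK hsq i)⟩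
  exact le_mul_of_one_le_left (hL i) (hone_le i)

lemma IsPreWeight.not_forall_assocSeq_two_pow_succ_le {v : ℝ → ℝ} (hv : IsPreWeight v) {q : ℝ}
    (hq : 1 ≤ q) (C : ℝ) :
    ¬ ∀ i, assocSeq v (2 ^ (i + 1)) ≤ C * q ^ i * assocSeq v (2 ^ i) ^ 2 := by
  intro hsucc
  obtain ⟨A, hA⟩ :=
    exists_le_pow_two_pow_of_succ_le_mul_sq (fun i => (hv.assocSeq_pos (2 ^ i)).le) hq hsucc
  obtain ⟨i, hi⟩ := ((tendsto_pow_atTop_atTop_of_one_lt one_lt_two).eventually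
    (hv.eventually_pow_lt_assocSeq A)).exists
  exact hi.not_ge (hA i)

lemma IsWeight.isPreWeight {u : ℝ → ℝ} (hu : IsWeight u) : IsPreWeight u := by
  obtain ⟨hpos, -, hanti, hrapid⟩ := hu
  refine ⟨fun t ht => hpos t ht.le, fun j => ?_⟩
  obtain ⟨T, hT⟩ := eventually_atTop.1 ((hrapid j).eventually_le_const one_pos)
  refine ⟨max 1 (T ^ j * u 0), ?_⟩
  rintro _ ⟨⟨t, ht⟩, rfl⟩
  have ht₀ : 0 ≤ t := le_of_lt ht
  rcases le_total T t with hTt | htT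
  · exact (hT t hTt).trans (le_max_left _ _)
  · refine le_trans ?_ (le_max_right _ _)
    exact mul_le_mul (pow_le_pow_left₀ ht₀ htT j) (hanti self_mem_Ici ht₀ ht₀) (hpos t ht₀).le
      (pow_nonneg (ht₀.trans htT) j)

namespace WeightSeq

variable {M : ℕ → ℝ} {t : ℝ}

lemma bddAbove_log_pow_div (hM : WeightSeq M) (ht : 0 < t) :
    BddAbove (range fun j : ℕ => Real.log (t ^ j / M j)) := by
  obtain ⟨hpos, -, hroot⟩ := hM
  have hev : ∀ᶠ j : ℕ in atTop, Real.log (t ^ j / M j) ≤ 0 := by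
    filter_upwards [hroot.eventually_ge_atTop t, eventually_ne_atTop 0] with j htj hj
    have hpow : t ^ j ≤ M j := by
      simpa only [one_div, Real.rpow_inv_natCast_pow (hpos j).le hj]
        using pow_le_pow_left₀ ht.le htj j
    exact Real.log_nonpos (div_nonneg (pow_nonneg ht.le j) (hpos j).le)
      (div_le_one_of_le₀ hpow (hpos j).le)
  exact IsBoundedUnder.bddAbove_range ⟨0, eventually_map.2 hev⟩

lemma pow_mul_vM_le (hM : WeightSeq M) (j : ℕ) (ht : 0 < t) : t ^ j * vM M t ≤ M j := by
  have hMj := hM.1 j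
  have hlog : Real.log (t ^ j / M j) ≤ omegaM M t := by
    rw [omegaM, if_neg ht.ne']
    exact le_ciSup (hM.bddAbove_log_pow_div ht) j
  rw [Real.log_le_iff_le_exp (by positivity), div_le_iff₀ hMj] at hlog
  rwa [vM, Real.exp_neg, ← div_eq_mul_inv, div_le_iff₀' (Real.exp_pos _)]

lemma isPreWeight_vM (hM : WeightSeq M) : IsPreWeight (vM M) where
  pos _ _ := Real.exp_pos _
  bddAbove j := ⟨M j, by rintro _ ⟨⟨t, ht⟩, rfl⟩; exact hM.pow_mul_vM_le j ht⟩

end WeightSeq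

theorem stmt16_general {v : ℝ → ℝ} (hv : IsPreWeight v) :
    ∃ f ∈ Hinf v, (fun z => f z * f z) ∉ Hinf v := by
  -- `a 0 = 0`, as `0⁻¹ = 0`.
  let a (n : ℕ) : ℝ := ((n : ℝ) ^ 2)⁻¹
  have ha : Summable a := Real.summable_nat_pow_inv.2 one_lt_two
  have ha₀ (n : ℕ) : 0 ≤ a n := by positivity
  refine ⟨weightedSeries v a, hv.weightedSeries_mem_Hinf ha, fun hmul => ?_⟩
  obtain ⟨C, hC⟩ := hv.exists_assocSeq_add_le ha ha₀ hmul
  refine hv.not_forall_assocSeq_two_pow_succ_le (q := 16) (by norm_num) C fun i => ?_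
  have ha_sq : a (2 ^ i) * a (2 ^ i) = ((16 : ℝ) ^ i)⁻¹ := by
    simp only [a, Nat.cast_pow, Nat.cast_ofNat, ← mul_inv, ← pow_mul, ← pow_add]
    rw [show (16 : ℝ) = 2 ^ 4 by norm_num, ← pow_mul]
    ring_nf
  have hdouble := hC (2 ^ i) (2 ^ i)
  rw [ha_sq, ← mul_two, ← pow_succ, inv_mul_le_iff₀ (by positivity)] at hdouble
  linarith

/-- Corollary: for every normalized weight `u` the space `H^∞_u(ℂ)` is not
closed under pointwise multiplication; in particular this holds for
`H^∞_{v_M}(ℂ)` whenever `M ∈ LC`. -/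
theorem stmt16 :
    (∀ u : ℝ → ℝ, IsWeight u → NormalizedWeight u →
      ∃ f g : ℂ → ℂ, f ∈ Hinf u ∧ g ∈ Hinf u ∧
        (fun z : ℂ => f z * g z) ∉ Hinf u) ∧
    (∀ M : ℕ → ℝ, LCset M →
      ∃ f g : ℂ → ℂ, f ∈ Hinf (vM M) ∧ g ∈ Hinf (vM M) ∧
        (fun z : ℂ => f z * g z) ∉ Hinf (vM M)) :=
  ⟨fun _ hu _ => let ⟨f, hf, hff⟩ := stmt16_general hu.isPreWeight; ⟨f, f, hf, hf, hff⟩,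
    fun _ hM => let ⟨f, hf, hff⟩ := stmt16_general hM.1.isPreWeight_vM; ⟨f, f, hf, hf, hff⟩⟩
end

section
/- Let M be a log-convex weight sequence. Then the following are equivalent: (i) the set ⋃_{c>0} H^∞_{v_{M,c}}(ℂ) is closed under pointwise multiplication; (ii) the set ⋂_{c>0} H^∞_{v_{M,c}}(ℂ) is closed under pointwise multiplication; (iii) M has moderate growth (mg). -/
open Filter Set

/-!
Moderate growth implies `2 ω_M(t) ≤ ω_M(C t)`, so a product of two functions of growth
`exp ω_M(c|z|)` has growth `exp ω_M(Cc|z|)`; this gives closedness of both sets.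

Conversely, test on the squares of `F(z) = ∑ (δ_j z)^j / M_j` with `δ` nonincreasing. Its
coefficients are nonnegative, so `F(t)²` is at least each product of two of its terms, while
log-convexity yields for every `n` a point `s` with `exp ω_M(s) = s^n / M_n`. Comparing at
`t = s / d` gives `δ_n^n M_n ≤ C d^n min_{j+k=n} M_j M_k`. For the union take `δ = 1`. For the
intersection `δ` may be any nonincreasing null sequence, and a sequence whose products with all of
these are bounded is itself bounded; this is applied to the `n`-th roots of
`M_n / min_{j+k=n} M_j M_k`.
-/

theorem summable_pow_self_of_eventually_le {x : ℕ → ℝ} (hx : ∀ j, 0 ≤ x j) {q : ℝ} (hq : q < 1)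
    (hxq : ∀ᶠ j in atTop, x j ≤ q) : Summable fun j => x j ^ j := by
  obtain ⟨i, hi⟩ := hxq.exists
  refine .of_norm_bounded_eventually_nat
    (summable_geometric_of_lt_one ((hx i).trans hi) hq) ?_
  filter_upwards [hxq] with j hj
  rw [Real.norm_of_nonneg (pow_nonneg (hx j) j)]
  exact pow_le_pow_left₀ (hx j) hj j

theorem bddAbove_of_forall_antitone_tendsto_zero {r : ℕ → ℝ}
    (h : ∀ δ : ℕ → ℝ, (∀ n, 0 < δ n) → Antitone δ → Tendsto δ atTop (nhds 0) →
      ∃ C, ∀ n, (δ n * r n) ^ n ≤ C) : BddAbove (range r) := by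
  by_contra hr
  set L : ℕ → ℝ := fun n => max 1 (partialSups r n) with hL
  have L_mono : Monotone L := fun _ _ hmn => max_le_max_left 1 (partialSups_monotone r hmn)
  have one_le_sqrt (n : ℕ) : 1 ≤ √(L n) := Real.one_le_sqrt.2 (le_max_left _ _)
  have L_tendsto : Tendsto L atTop atTop :=
    tendsto_atTop_mono (fun n => le_max_right 1 (partialSups r n)) <|
      tendsto_atTop_atTop_of_monotone' (partialSups_monotone r)
        (mt bddAbove_range_partialSups.1 hr)
  obtain ⟨C, hC⟩ := h (fun n => (√(L n))⁻¹)
    (fun n => inv_pos.2 (one_pos.trans_le (one_le_sqrt n)))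
    (fun m n hmn => inv_anti₀ (one_pos.trans_le (one_le_sqrt m)) (Real.sqrt_le_sqrt (L_mono hmn)))
    (Real.tendsto_sqrt_atTop.comp L_tendsto).inv_tendsto_atTop
  refine hr ⟨max (r 0) (max 1 C ^ 2), forall_mem_range.2 fun n => ?_⟩
  -- At a record index `m` we have `L m = r m`, so the hypothesis bounds `√(r m) ^ m`.
  obtain ⟨m, hmn, hm⟩ := exists_partialSups_eq r n
  refine ((le_partialSups r n).trans_eq hm).trans ?_
  rcases Nat.eq_zero_or_pos m with rfl | hm0
  · exact le_max_left _ _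
  refine le_max_of_le_right ?_
  rcases le_total (r m) 1 with hrm | hrm
  · exact hrm.trans (one_le_pow₀ (le_max_left 1 C))
  have record : L m = r m := by
    have : partialSups r m = r m :=
      le_antisymm ((partialSups_monotone r hmn).trans_eq hm) (le_partialSups r m)
    simp only [hL, this, max_eq_right hrm]
  have sqrt_le : √(r m) ≤ C := calc
    √(r m) ≤ √(r m) ^ m := le_self_pow₀ (Real.one_le_sqrt.2 hrm) hm0.ne'
    _ = ((√(L m))⁻¹ * r m) ^ m := by rw [record, inv_mul_eq_div, Real.div_sqrt]
    _ ≤ C := hC m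
  calc r m = √(r m) ^ 2 := (Real.sq_sqrt (zero_le_one.trans hrm)).symm
    _ ≤ max 1 C ^ 2 := by gcongr; exact sqrt_le.trans (le_max_right 1 C)

theorem exists_le_mul_pow_of_forall_antitone_tendsto_zero {x : ℕ → ℝ} (hx : ∀ n, 0 ≤ x n)
    (h : ∀ δ : ℕ → ℝ, (∀ n, 0 < δ n) → Antitone δ → Tendsto δ atTop (nhds 0) →
      ∃ C, ∀ n, δ n ^ n * x n ≤ C) : ∃ K A, 0 ≤ A ∧ ∀ n, x n ≤ K * A ^ n := by
  have root_pow {n : ℕ} (hn : n ≠ 0) : (x n ^ (n⁻¹ : ℝ)) ^ n = x n :=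
    Real.rpow_inv_natCast_pow (hx n) hn
  have root_nonneg (n : ℕ) : 0 ≤ x n ^ (n⁻¹ : ℝ) := Real.rpow_nonneg (hx n) _
  obtain ⟨A, hA⟩ := bddAbove_of_forall_antitone_tendsto_zero (r := fun n => x n ^ (n⁻¹ : ℝ))
    fun δ hδ hδa hδ0 => by
      obtain ⟨C, hC⟩ := h δ hδ hδa hδ0
      refine ⟨max 1 C, fun n => ?_⟩
      rcases eq_or_ne n 0 with rfl | hn
      · simp
      · rw [mul_pow, root_pow hn]
        exact le_max_of_le_right (hC n)
  have root_le (n : ℕ) : x n ^ (n⁻¹ : ℝ) ≤ A := hA (mem_range_self n)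
  have A_nonneg : 0 ≤ A := (root_nonneg 0).trans (root_le 0)
  refine ⟨max 1 (x 0), A, A_nonneg, fun n => ?_⟩
  rcases eq_or_ne n 0 with rfl | hn
  · simp
  calc x n = (x n ^ (n⁻¹ : ℝ)) ^ n := (root_pow hn).symm
    _ ≤ A ^ n := pow_le_pow_left₀ (root_nonneg n) (root_le n) n
    _ ≤ max 1 (x 0) * A ^ n := le_mul_of_one_le_left (pow_nonneg A_nonneg n) (le_max_left _ _)

theorem differentiable_tsum_mul_pow {b : ℕ → ℂ}
    (hb : ∀ R : ℝ, 0 ≤ R → Summable fun j => ‖b j‖ * R ^ j) :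
    Differentiable ℂ fun z => ∑' j, b j * z ^ j := by
  intro z
  refine (Complex.differentiableOn_tsum_of_summable_norm (U := Metric.ball 0 (‖z‖ + 1))
    (hb (‖z‖ + 1) (by positivity)) (fun _ => by fun_prop) Metric.isOpen_ball
    fun j w hw => ?_).differentiableAt (Metric.isOpen_ball.mem_nhds (by simp))
  rw [norm_mul, norm_pow]
  gcongr
  exact (mem_ball_zero_iff.1 hw).le

theorem mul_pow_le_norm_tsum {b : ℕ → ℝ} (hb : ∀ j, 0 ≤ b j) {t : ℝ} (ht : 0 ≤ t)
    (hs : Summable fun j => b j * t ^ j) (j : ℕ) :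
    b j * t ^ j ≤ ‖∑' i, (b i : ℂ) * (t : ℂ) ^ i‖ := by
  have ofReal_tsum : ∑' i, (b i : ℂ) * (t : ℂ) ^ i = ((∑' i, b i * t ^ i : ℝ) : ℂ) := by
    push_cast; rfl
  rw [ofReal_tsum, Complex.norm_real]
  exact (hs.le_tsum j fun i _ => mul_nonneg (hb i) (pow_nonneg ht i)).trans (Real.le_norm_self _)

theorem Hinf_subset_Hinf {v w : ℝ → ℝ} (hwv : ∀ t, 0 ≤ t → w t ≤ v t) : Hinf v ⊆ Hinf w := by
  rintro f ⟨hf, C, hC⟩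
  refine ⟨hf, C, fun z => le_trans ?_ (hC z)⟩
  gcongr
  exact hwv _ (norm_nonneg z)

theorem mul_mem_Hinf {u v w : ℝ → ℝ} (hv : ∀ t, 0 ≤ t → 0 ≤ v t) (hw : ∀ t, 0 ≤ t → 0 ≤ w t)
    (huvw : ∀ t, 0 ≤ t → u t ≤ v t * w t) {f g : ℂ → ℂ} (hf : f ∈ Hinf v) (hg : g ∈ Hinf w) :
    (fun z => f z * g z) ∈ Hinf u := by
  obtain ⟨hf, A, hA⟩ := hf
  obtain ⟨hg, B, hB⟩ := hg
  refine ⟨hf.mul hg, A * B, fun z => ?_⟩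
  have hvz : 0 ≤ ‖f z‖ * v ‖z‖ := mul_nonneg (norm_nonneg _) (hv _ (norm_nonneg z))
  have hwz : 0 ≤ ‖g z‖ * w ‖z‖ := mul_nonneg (norm_nonneg _) (hw _ (norm_nonneg z))
  calc ‖f z * g z‖ * u ‖z‖ ≤ ‖f z‖ * ‖g z‖ * (v ‖z‖ * w ‖z‖) := by
        rw [norm_mul]
        gcongr
        exact huvw _ (norm_nonneg z)
    _ = (‖f z‖ * v ‖z‖) * (‖g z‖ * w ‖z‖) := by ring
    _ ≤ A * B := mul_le_mul (hA z) (hB z) hwz (hvz.trans (hA z))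

theorem mem_Hinf_vMc {M : ℕ → ℝ} {c : ℝ} {f : ℂ → ℂ} :
    f ∈ Hinf (vMc M c) ↔ Differentiable ℂ f ∧
      ∃ C : ℝ, ∀ z, ‖f z‖ ≤ C * Real.exp (omegaM M (c * ‖z‖)) := by
  simp only [Hinf, vMc, mem_ofPred_eq, Real.exp_neg, ← div_eq_mul_inv,
    div_le_iff₀ (Real.exp_pos _)]

theorem convSeq_add_le (M N : ℕ → ℝ) (j k : ℕ) : convSeq M N (j + k) ≤ M j * N k :=
  (Finset.inf'_le _ (Finset.mem_range_succ_iff.2 (Nat.le_add_right j k))).trans_eq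
    (by rw [Nat.add_sub_cancel_left])

theorem exists_convSeq_eq (M N : ℕ → ℝ) (n : ℕ) :
    ∃ j k, j + k = n ∧ convSeq M N n = M j * N k := by
  obtain ⟨j, hj, hjn⟩ := Finset.exists_mem_eq_inf' (Finset.nonempty_range_add_one (n := n))
    fun j => M j * N (n - j)
  exact ⟨j, n - j, Nat.add_sub_cancel' (Finset.mem_range_succ_iff.1 hj), hjn⟩

theorem convSeq_pos {M N : ℕ → ℝ} (hM : ∀ j, 0 < M j) (hN : ∀ j, 0 < N j) (n : ℕ) :
    0 < convSeq M N n := by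
  obtain ⟨j, k, -, h⟩ := exists_convSeq_eq M N n
  exact h ▸ mul_pos (hM j) (hN k)

namespace LogConvexSeq

variable {M : ℕ → ℝ}

theorem monotone_ratio (hMlc : LogConvexSeq M) (hM : ∀ j, 0 < M j) :
    Monotone fun n => M (n + 1) / M n := by
  refine monotone_nat_of_le_succ fun n => ?_
  rw [div_le_div_iff₀ (hM _) (hM _), ← sq, mul_comm]
  exact hMlc (n + 1) n.succ_pos

theorem pow_div_le (hMlc : LogConvexSeq M) (hM : ∀ j, 0 < M j) (n i : ℕ) :
    (M (n + 1) / M n) ^ i / M i ≤ (M (n + 1) / M n) ^ n / M n := by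
  have ratio_mono := hMlc.monotone_ratio hM
  set s := M (n + 1) / M n
  have s_pow_pos (m : ℕ) : 0 < s ^ m := pow_pos (div_pos (hM _) (hM _)) m
  have le_succ_iff (m : ℕ) : s ^ m / M m ≤ s ^ (m + 1) / M (m + 1) ↔ M (m + 1) / M m ≤ s := by
    rw [div_le_div_iff₀ (hM _) (hM _), pow_succ, mul_assoc,
      mul_le_mul_iff_right₀ (s_pow_pos m), div_le_iff₀ (hM m)]
  have succ_le_iff (m : ℕ) : s ^ (m + 1) / M (m + 1) ≤ s ^ m / M m ↔ s ≤ M (m + 1) / M m := by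
    rw [div_le_div_iff₀ (hM _) (hM _), pow_succ, mul_assoc,
      mul_le_mul_iff_right₀ (s_pow_pos m), le_div_iff₀ (hM m)]
  have mono : MonotoneOn (fun m => s ^ m / M m) (Iic n) :=
    monotoneOn_of_le_add_one ordConnected_Iic fun m _ hm _ => (le_succ_iff m).2 (ratio_mono hm)
  have anti : AntitoneOn (fun m => s ^ m / M m) (Ici n) :=
    antitoneOn_of_add_one_le ordConnected_Ici fun m _ hm _ => (succ_le_iff m).2 (ratio_mono hm)
  rcases le_total i n with hin | hni
  · exact mono hin self_mem_Iic hin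
  · exact anti self_mem_Ici hni hni

end LogConvexSeq

namespace WeightSeq

variable {M : ℕ → ℝ}

theorem eventually_pow_le (hM : WeightSeq M) {t : ℝ} (ht : 0 ≤ t) :
    ∀ᶠ j in atTop, t ^ j ≤ M j := by
  filter_upwards [hM.2.2.eventually_ge_atTop t, eventually_ne_atTop 0] with j hj hj0
  calc t ^ j ≤ (M j ^ (1 / (j : ℝ))) ^ j := pow_le_pow_left₀ ht hj j
    _ = M j := by rw [one_div, Real.rpow_inv_natCast_pow (hM.1 j).le hj0]

theorem bddAbove_range_log (hM : WeightSeq M) {t : ℝ} (ht : 0 ≤ t) :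
    BddAbove (range fun j => Real.log (t ^ j / M j)) := by
  refine IsBoundedUnder.bddAbove_range ⟨0, eventually_map.2 ?_⟩
  filter_upwards [hM.eventually_pow_le ht] with j hj
  exact Real.log_nonpos (div_nonneg (pow_nonneg ht j) (hM.1 j).le)
    (div_le_one_of_le₀ hj (hM.1 j).le)

theorem isLUB_exp_omegaM (hM : WeightSeq M) {t : ℝ} (ht : 0 ≤ t) :
    IsLUB (range fun j => t ^ j / M j) (Real.exp (omegaM M t)) := by
  rcases ht.eq_or_lt with rfl | ht
  · refine IsGreatest.isLUB ⟨⟨0, by simp [omegaM, hM.2.1]⟩, forall_mem_range.2 fun j => ?_⟩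
    rcases eq_or_ne j 0 with rfl | hj <;> simp [omegaM, hM.2.1, *]
  have term_pos (j : ℕ) : 0 < t ^ j / M j := div_pos (pow_pos ht j) (hM.1 j)
  rw [omegaM, if_neg ht.ne']
  refine ⟨forall_mem_range.2 fun j => ?_, fun B hB => ?_⟩
  · rw [← Real.log_le_iff_le_exp (term_pos j)]
    exact le_ciSup (hM.bddAbove_range_log ht.le) j
  · have B_pos : 0 < B := (term_pos 0).trans_le (hB (mem_range_self 0))
    rw [← Real.le_log_iff_exp_le B_pos]
    exact ciSup_le fun j => Real.log_le_log (term_pos j) (hB (mem_range_self j))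

theorem pow_div_le_exp_omegaM (hM : WeightSeq M) {t : ℝ} (ht : 0 ≤ t) (j : ℕ) :
    t ^ j / M j ≤ Real.exp (omegaM M t) :=
  (hM.isLUB_exp_omegaM ht).1 (mem_range_self j)

theorem omegaM_monotoneOn (hM : WeightSeq M) : MonotoneOn (omegaM M) (Ici 0) := by
  intro s hs t ht hst
  rw [← Real.exp_le_exp]
  refine (hM.isLUB_exp_omegaM hs).2 (forall_mem_range.2 fun j => ?_)
  refine le_trans ?_ (hM.pow_div_le_exp_omegaM ht j)
  exact div_le_div_of_nonneg_right (pow_le_pow_left₀ hs hst j) (hM.1 j).le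

theorem omegaM_add_self_le (hM : WeightSeq M) {C : ℝ} (hC : 0 < C)
    (hMG : ∀ j k, M (j + k) ≤ C ^ (j + k) * M j * M k) {t : ℝ} (ht : 0 ≤ t) :
    omegaM M t + omegaM M t ≤ omegaM M (C * t) := by
  rcases ht.eq_or_lt with rfl | ht
  · simp [omegaM]
  have hCt : 0 < C * t := mul_pos hC ht
  have term_pos (j : ℕ) : 0 < t ^ j / M j := div_pos (pow_pos ht j) (hM.1 j)
  rw [omegaM, omegaM, if_neg ht.ne', if_neg hCt.ne']
  refine ciSup_add_ciSup_le fun j k =>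
    le_trans ?_ (le_ciSup (hM.bddAbove_range_log hCt.le) (j + k))
  rw [← Real.log_mul (term_pos j).ne' (term_pos k).ne']
  refine Real.log_le_log (mul_pos (term_pos j) (term_pos k)) ?_
  rw [div_mul_div_comm, div_le_div_iff₀ (mul_pos (hM.1 j) (hM.1 k)) (hM.1 _)]
  calc t ^ j * t ^ k * M (j + k) ≤ t ^ j * t ^ k * (C ^ (j + k) * M j * M k) := by
        gcongr
        exact hMG j k
    _ = (C * t) ^ (j + k) * (M j * M k) := by ring

theorem Hinf_vMc_subset (hM : WeightSeq M) {c d : ℝ} (hc : 0 ≤ c) (hcd : c ≤ d) :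
    Hinf (vMc M c) ⊆ Hinf (vMc M d) := by
  refine Hinf_subset_Hinf fun t ht => Real.exp_le_exp.2 (neg_le_neg ?_)
  exact hM.omegaM_monotoneOn (mul_nonneg hc ht) (mul_nonneg (hc.trans hcd) ht)
    (mul_le_mul_of_nonneg_right hcd ht)

theorem mul_mem_Hinf_vMc (hM : WeightSeq M) {C : ℝ} (hC : 0 < C)
    (hMG : ∀ j k, M (j + k) ≤ C ^ (j + k) * M j * M k) {c : ℝ} (hc : 0 ≤ c) {f g : ℂ → ℂ}
    (hf : f ∈ Hinf (vMc M c)) (hg : g ∈ Hinf (vMc M c)) :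
    (fun z => f z * g z) ∈ Hinf (vMc M (C * c)) := by
  refine mul_mem_Hinf (fun _ _ => Real.exp_nonneg _) (fun _ _ => Real.exp_nonneg _)
    (fun t ht => ?_) hf hg
  simp only [vMc]
  rw [← Real.exp_add, Real.exp_le_exp, ← neg_add, neg_le_neg_iff, mul_assoc]
  exact hM.omegaM_add_self_le hC hMG (mul_nonneg hc ht)

theorem exists_exp_omegaM_eq (hM : WeightSeq M) (hMlc : LogConvexSeq M) (n : ℕ) :
    ∃ s, 0 < s ∧ Real.exp (omegaM M s) = s ^ n / M n := by
  have s_pos : 0 < M (n + 1) / M n := div_pos (hM.1 _) (hM.1 _)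
  refine ⟨_, s_pos, (hM.isLUB_exp_omegaM s_pos.le).unique (IsGreatest.isLUB ?_)⟩
  exact ⟨mem_range_self n, forall_mem_range.2 (hMlc.pow_div_le hM.1 n)⟩

theorem mul_pow_le_mul_exp_omegaM (hM : WeightSeq M) {c R : ℝ} (hc : 0 < c) (hR : 0 ≤ R) {b : ℝ}
    (hb : 0 ≤ b) (j : ℕ) : b * R ^ j ≤ b * M j / c ^ j * Real.exp (omegaM M (c * R)) := by
  have hMj := hM.1 j
  calc b * R ^ j = b * M j / c ^ j * ((c * R) ^ j / M j) := by rw [mul_pow]; field_simp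
    _ ≤ b * M j / c ^ j * Real.exp (omegaM M (c * R)) := by
        gcongr
        exact hM.pow_div_le_exp_omegaM (by positivity) j

theorem summable_norm_mul_pow (hM : WeightSeq M) {b : ℕ → ℂ} {c R : ℝ} (hc : 0 < c)
    (hb : Summable fun j => ‖b j‖ * M j / c ^ j) (hR : 0 ≤ R) :
    Summable fun j => ‖b j‖ * R ^ j :=
  .of_nonneg_of_le (fun _ => by positivity)
    (fun j => hM.mul_pow_le_mul_exp_omegaM hc hR (norm_nonneg (b j)) j) (hb.mul_right _)

theorem tsum_mul_pow_mem_Hinf (hM : WeightSeq M) {b : ℕ → ℂ} {c : ℝ} (hc : 0 < c)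
    (hb : Summable fun j => ‖b j‖ * M j / c ^ j) :
    (fun z => ∑' j, b j * z ^ j) ∈ Hinf (vMc M c) := by
  refine mem_Hinf_vMc.2 ⟨differentiable_tsum_mul_pow fun R => hM.summable_norm_mul_pow hc hb,
    ∑' j, ‖b j‖ * M j / c ^ j, fun z => ?_⟩
  rw [← tsum_mul_right]
  refine tsum_of_norm_bounded (hb.mul_right _).hasSum fun j => ?_
  rw [norm_mul, norm_pow]
  exact hM.mul_pow_le_mul_exp_omegaM hc (norm_nonneg z) (norm_nonneg (b j)) j

end WeightSeq

/-- The power series `∑ (δ_j z)^j / M_j`, the test function whose square detects moderate growth.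
For a weight sequence `M` it converges everywhere if `δ` is bounded; where it does not converge
absolutely, its value is `0`. -/
noncomputable def dampedSeries (M δ : ℕ → ℝ) (z : ℂ) : ℂ :=
  ∑' j, ((δ j ^ j / M j : ℝ) : ℂ) * z ^ j

section DampedSeries

variable {M δ : ℕ → ℝ}

theorem summable_norm_dampedSeries_coeff (hM : ∀ j, 0 < M j) (hδ : ∀ j, 0 ≤ δ j) {q c : ℝ}
    (hqc : q < c) (hδq : ∀ᶠ j in atTop, δ j ≤ q) :
    Summable fun j => ‖((δ j ^ j / M j : ℝ) : ℂ)‖ * M j / c ^ j := by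
  obtain ⟨i, hi⟩ := hδq.exists
  have hc : 0 < c := ((hδ i).trans hi).trans_lt hqc
  have term_eq (j : ℕ) : ‖((δ j ^ j / M j : ℝ) : ℂ)‖ * M j / c ^ j = (δ j / c) ^ j := by
    rw [Complex.norm_real, Real.norm_of_nonneg (div_nonneg (pow_nonneg (hδ j) j) (hM j).le),
      div_mul_cancel₀ _ (hM j).ne', div_pow]
  simp only [term_eq]
  refine summable_pow_self_of_eventually_le (fun j => div_nonneg (hδ j) hc.le)
    ((div_lt_one hc).2 hqc) ?_
  filter_upwards [hδq] with j hj using div_le_div_of_nonneg_right hj hc.le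

theorem dampedSeries_mem_Hinf (hM : WeightSeq M) (hδ : ∀ j, 0 ≤ δ j) {q c : ℝ}
    (hqc : q < c) (hδq : ∀ᶠ j in atTop, δ j ≤ q) : dampedSeries M δ ∈ Hinf (vMc M c) := by
  obtain ⟨i, hi⟩ := hδq.exists
  exact hM.tsum_mul_pow_mem_Hinf (((hδ i).trans hi).trans_lt hqc)
    (summable_norm_dampedSeries_coeff hM.1 hδ hqc hδq)

theorem le_norm_dampedSeries (hM : WeightSeq M) (hδ : ∀ j, 0 ≤ δ j) (hδa : Antitone δ) {t : ℝ}
    (ht : 0 ≤ t) (j : ℕ) : δ j ^ j / M j * t ^ j ≤ ‖dampedSeries M δ t‖ := by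
  have coeff_nonneg (i : ℕ) : 0 ≤ δ i ^ i / M i := div_nonneg (pow_nonneg (hδ i) i) (hM.1 i).le
  have summable : Summable fun i => ‖((δ i ^ i / M i : ℝ) : ℂ)‖ * t ^ i :=
    hM.summable_norm_mul_pow (add_pos_of_nonneg_of_pos (hδ 0) one_pos)
      (summable_norm_dampedSeries_coeff hM.1 hδ (lt_add_one (δ 0))
        (.of_forall fun i => hδa i.zero_le)) ht
  simp only [Complex.norm_real, Real.norm_of_nonneg (coeff_nonneg _)] at summable
  exact mul_pow_le_norm_tsum coeff_nonneg ht summable j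

theorem pow_div_mul_pow_le_norm_dampedSeries_sq (hM : WeightSeq M) (hδ : ∀ j, 0 ≤ δ j)
    (hδa : Antitone δ) {t : ℝ} (ht : 0 ≤ t) (j k : ℕ) :
    δ (j + k) ^ (j + k) / (M j * M k) * t ^ (j + k) ≤ ‖dampedSeries M δ t‖ ^ 2 := by
  have hMj := hM.1 j
  have hMk := hM.1 k
  have hδjk := hδ (j + k)
  have hδk := hδ k
  calc δ (j + k) ^ (j + k) / (M j * M k) * t ^ (j + k)
      = δ (j + k) ^ j / M j * t ^ j * (δ (j + k) ^ k / M k * t ^ k) := by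
        simp only [pow_add]; field_simp
    _ ≤ δ j ^ j / M j * t ^ j * (δ k ^ k / M k * t ^ k) := by
        gcongr
        · exact mul_nonneg (div_nonneg (pow_nonneg (hδ j) j) hMj.le) (pow_nonneg ht j)
        · exact hδa (j.le_add_right k)
        · exact hδa (k.le_add_left j)
    _ ≤ ‖dampedSeries M δ t‖ ^ 2 := by
        rw [sq]
        gcongr
        · exact le_norm_dampedSeries hM hδ hδa ht j
        · exact le_norm_dampedSeries hM hδ hδa ht k

theorem exists_pow_mul_le_convSeq_of_dampedSeries_sq_mem (hM : WeightSeq M)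
    (hMlc : LogConvexSeq M) (hδ : ∀ j, 0 ≤ δ j) (hδa : Antitone δ) {d : ℝ} (hd : 0 < d)
    (hmem : (fun z => dampedSeries M δ z * dampedSeries M δ z) ∈ Hinf (vMc M d)) :
    ∃ C, ∀ n, δ n ^ n * M n ≤ C * d ^ n * convSeq M M n := by
  obtain ⟨-, C, hC⟩ := mem_Hinf_vMc.1 hmem
  refine ⟨C, fun n => ?_⟩
  obtain ⟨j, k, rfl, hjk⟩ := exists_convSeq_eq M M n
  obtain ⟨s, hs, hsn⟩ := hM.exists_exp_omegaM_eq hMlc (j + k)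
  have hMn := hM.1 (j + k)
  have hMjk : 0 < M j * M k := mul_pos (hM.1 j) (hM.1 k)
  have ht : 0 < s / d := div_pos hs hd
  have comparison : δ (j + k) ^ (j + k) / (M j * M k) * (s / d) ^ (j + k)
      ≤ C * (s ^ (j + k) / M (j + k)) := by
    refine (pow_div_mul_pow_le_norm_dampedSeries_sq hM hδ hδa ht.le j k).trans ?_
    have := hC (s / d : ℝ)
    rwa [norm_mul, ← sq, Complex.norm_real, Real.norm_of_nonneg ht.le,
      mul_div_cancel₀ _ hd.ne', hsn] at this
  rw [div_pow, div_mul_div_comm, ← mul_div_assoc,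
    div_le_div_iff₀ (by positivity) hMn] at comparison
  rw [hjk]
  refine le_of_mul_le_mul_right ?_ (pow_pos hs (j + k))
  linear_combination comparison

end DampedSeries

section ModerateGrowth

variable {M : ℕ → ℝ}

theorem MGseq_of_le_convSeq (hM : WeightSeq M) {K A : ℝ} (hA : 0 ≤ A)
    (h : ∀ n, M n ≤ K * A ^ n * convSeq M M n) : MGseq M := by
  refine ⟨max 1 K * max 1 A,
    one_le_mul_of_one_le_of_one_le (le_max_left _ _) (le_max_left _ _), fun j k => ?_⟩
  rcases eq_or_ne (j + k) 0 with hjk | hjk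
  · obtain ⟨rfl, rfl⟩ := Nat.add_eq_zero_iff.1 hjk
    simp [hM.2.1]
  have const_le : K * A ^ (j + k) ≤ (max 1 K * max 1 A) ^ (j + k) := by
    rw [mul_pow]
    gcongr
    · exact (le_max_right 1 K).trans (le_self_pow₀ (le_max_left 1 K) hjk)
    · exact le_max_right 1 A
  calc M (j + k) ≤ K * A ^ (j + k) * convSeq M M (j + k) := h _
    _ ≤ (max 1 K * max 1 A) ^ (j + k) * (M j * M k) :=
        mul_le_mul const_le (convSeq_add_le M M j k) (convSeq_pos hM.1 hM.1 _).le (by positivity)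
    _ = (max 1 K * max 1 A) ^ (j + k) * M j * M k := (mul_assoc _ _ _).symm

theorem MGseq_of_sq_mem_iUnion (hM : WeightSeq M) (hMlc : LogConvexSeq M)
    (h : ∀ f ∈ ⋃ c : {c : ℝ // 0 < c}, Hinf (vMc M c),
      (fun z => f z * f z) ∈ ⋃ c : {c : ℝ // 0 < c}, Hinf (vMc M c)) : MGseq M := by
  have mem : dampedSeries M (fun _ => 1) ∈ Hinf (vMc M 2) :=
    dampedSeries_mem_Hinf hM (fun _ => zero_le_one) one_lt_two (.of_forall fun _ => le_rfl)
  obtain ⟨⟨d, hd⟩, sq_mem⟩ := mem_iUnion.1 (h _ (mem_iUnion.2 ⟨⟨2, two_pos⟩, mem⟩))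
  obtain ⟨C, hC⟩ := exists_pow_mul_le_convSeq_of_dampedSeries_sq_mem hM hMlc
    (fun _ => zero_le_one) antitone_const hd sq_mem
  simp only [one_pow, one_mul] at hC
  exact MGseq_of_le_convSeq hM hd.le hC

theorem MGseq_of_sq_mem_iInter (hM : WeightSeq M) (hMlc : LogConvexSeq M)
    (h : ∀ f ∈ ⋂ c : {c : ℝ // 0 < c}, Hinf (vMc M c),
      (fun z => f z * f z) ∈ ⋂ c : {c : ℝ // 0 < c}, Hinf (vMc M c)) : MGseq M := by
  have conv_pos := convSeq_pos hM.1 hM.1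
  obtain ⟨K, A, hA, hKA⟩ := exists_le_mul_pow_of_forall_antitone_tendsto_zero
    (x := fun n => M n / convSeq M M n) (fun n => (div_pos (hM.1 n) (conv_pos n)).le)
    fun δ hδ hδa hδ0 => by
      have mem : dampedSeries M δ ∈ ⋂ c : {c : ℝ // 0 < c}, Hinf (vMc M c) :=
        mem_iInter.2 fun c => dampedSeries_mem_Hinf hM (fun j => (hδ j).le) (half_lt_self c.2)
          (hδ0.eventually_le_const (half_pos c.2))
      obtain ⟨C, hC⟩ := exists_pow_mul_le_convSeq_of_dampedSeries_sq_mem hM hMlc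
        (fun j => (hδ j).le) hδa one_pos (mem_iInter.1 (h _ mem) ⟨1, one_pos⟩)
      refine ⟨C, fun n => ?_⟩
      rw [← mul_div_assoc, div_le_iff₀ (conv_pos n)]
      simpa only [one_pow, mul_one] using hC n
  exact MGseq_of_le_convSeq hM hA fun n => (div_le_iff₀ (conv_pos n)).1 (hKA n)

theorem MGseq.mul_mem_iUnion (hMG : MGseq M) (hM : WeightSeq M) {f g : ℂ → ℂ}
    (hf : f ∈ ⋃ c : {c : ℝ // 0 < c}, Hinf (vMc M c))
    (hg : g ∈ ⋃ c : {c : ℝ // 0 < c}, Hinf (vMc M c)) :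
    (fun z => f z * g z) ∈ ⋃ c : {c : ℝ // 0 < c}, Hinf (vMc M c) := by
  obtain ⟨C, hC, hMG⟩ := hMG
  obtain ⟨⟨c, hc⟩, hf⟩ := mem_iUnion.1 hf
  obtain ⟨⟨d, hd⟩, hg⟩ := mem_iUnion.1 hg
  have C_pos : 0 < C := one_pos.trans_le hC
  have max_pos : 0 < max c d := lt_max_of_lt_left hc
  exact mem_iUnion.2 ⟨⟨C * max c d, mul_pos C_pos max_pos⟩,
    hM.mul_mem_Hinf_vMc C_pos hMG max_pos.le (hM.Hinf_vMc_subset hc.le (le_max_left c d) hf)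
      (hM.Hinf_vMc_subset hd.le (le_max_right c d) hg)⟩

theorem MGseq.mul_mem_iInter (hMG : MGseq M) (hM : WeightSeq M) {f g : ℂ → ℂ}
    (hf : f ∈ ⋂ c : {c : ℝ // 0 < c}, Hinf (vMc M c))
    (hg : g ∈ ⋂ c : {c : ℝ // 0 < c}, Hinf (vMc M c)) :
    (fun z => f z * g z) ∈ ⋂ c : {c : ℝ // 0 < c}, Hinf (vMc M c) := by
  obtain ⟨C, hC, hMG⟩ := hMG
  have C_pos : 0 < C := one_pos.trans_le hC
  refine mem_iInter.2 fun ⟨c, hc⟩ => ?_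
  have hcC : 0 < c / C := div_pos hc C_pos
  have := hM.mul_mem_Hinf_vMc C_pos hMG hcC.le (mem_iInter.1 hf ⟨c / C, hcC⟩)
    (mem_iInter.1 hg ⟨c / C, hcC⟩)
  rwa [mul_div_cancel₀ _ C_pos.ne'] at this

end ModerateGrowth

/-- Theorem: for a log-convex weight sequence `M`, closedness under pointwise
multiplication of the union `⋃_{c>0} H^∞_{v_{M,c}}(ℂ)`, closedness of the
intersection `⋂_{c>0} H^∞_{v_{M,c}}(ℂ)`, and moderate growth (mg) of `M` are
all equivalent. -/
theorem stmt19 (M : ℕ → ℝ) (hM : WeightSeq M) (hMlc : LogConvexSeq M) :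
    ((∀ f g : ℂ → ℂ,
        f ∈ ⋃ c : {c : ℝ // 0 < c}, Hinf (vMc M c.1) →
        g ∈ ⋃ c : {c : ℝ // 0 < c}, Hinf (vMc M c.1) →
        (fun z : ℂ => f z * g z) ∈ ⋃ c : {c : ℝ // 0 < c}, Hinf (vMc M c.1)) ↔
      MGseq M) ∧
    ((∀ f g : ℂ → ℂ,
        f ∈ ⋂ c : {c : ℝ // 0 < c}, Hinf (vMc M c.1) →
        g ∈ ⋂ c : {c : ℝ // 0 < c}, Hinf (vMc M c.1) →
        (fun z : ℂ => f z * g z) ∈ ⋂ c : {c : ℝ // 0 < c}, Hinf (vMc M c.1)) ↔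
      MGseq M) := by
  exact ⟨⟨fun h => MGseq_of_sq_mem_iUnion hM hMlc fun f hf => h f f hf hf,
      fun hMG _ _ hf hg => hMG.mul_mem_iUnion hM hf hg⟩,
    ⟨fun h => MGseq_of_sq_mem_iInter hM hMlc fun f hf => h f f hf hf,
      fun hMG _ _ hf hg => hMG.mul_mem_iInter hM hf hg⟩⟩
end
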